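/- There exist absolute constants k ≥ 0 and, for each C₀, C_f > 0, a constant C = C(C₀, C_f) with the following property. Let t > 0 and x ∈ ℝ². Let K_g : [0,t] × ℝ² → [0,∞) be measurable and suppose that for every a ∈ [0,t] the flux of K_g on the backward light cone with tip (a,x) is at most C_f. Let f : [0,t] × ℝ² × ℝ² → [0,∞) be measurable with f ≤ C₀ almost everywhere. Then for every ε ∈ (0,1]: ∫₀ᵗ ∫_{|y−x| ≤ t−s} ∫_{ℝ²} K_g(s,y) f(s,y,p) / ( p_0 (1 + p̂·ξ) √((t−s)² − |y−x|²) ) dp dy ds ≤ C (1+t)^k [ ε^{−1/10} ( ∫₀ᵗ ∫_{|y−x| ≤ t−s} (∫_{ℝ²} p_0² f dp) / √((t−s)² − |y−x|²) dy ds )^{2/5} + ε^{3/10} ( ∫₀ᵗ ∫_{|y−x| ≤ t−s} (∫_{ℝ²} p_0⁴ f dp) / √((t−s)² − |y−x|²) dy ds )^{2/5} ]. -/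

import Mathlib

open MeasureTheory Set
open scoped NNReal ENNReal RealInnerProductSpace

/-- `p₀ = √(1 + |p|²)` for `p ∈ ℝ²`. -/
noncomputable def pZero (p : EuclideanSpace ℝ (Fin 2)) : ℝ := Real.sqrt (1 + ‖p‖ ^ 2)

/-- `p̂ = p / p₀` for `p ∈ ℝ²`. -/
noncomputable def pHat (p : EuclideanSpace ℝ (Fin 2)) : EuclideanSpace ℝ (Fin 2) :=
  (pZero p)⁻¹ • p

/-- The unit vector `(cos θ, sin θ) ∈ ℝ²`. -/
noncomputable def unitVec (θ : ℝ) : EuclideanSpace ℝ (Fin 2) :=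
  (EuclideanSpace.equiv (Fin 2) ℝ).symm ![Real.cos θ, Real.sin θ]

/-- The flux `∫₀^a ∫₀^{2π} (a−s) K_g(s, x + (a−s)ω(θ))² dθ ds` of `K_g` on the backward
light cone with tip `(a, x)`. -/
noncomputable def coneFlux (Kg : ℝ → EuclideanSpace ℝ (Fin 2) → ℝ) (a : ℝ)
    (x : EuclideanSpace ℝ (Fin 2)) : ℝ≥0∞ :=
  ∫⁻ s in Ioc (0 : ℝ) a, ∫⁻ θ in Ioc (0 : ℝ) (2 * Real.pi),
    ENNReal.ofReal ((a - s) * Kg s (x + (a - s) • unitVec θ) ^ 2)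


theorem lint_plane (G : EuclideanSpace ℝ (Fin 2) → ℝ≥0∞) (hG : Measurable G) :
    ∫⁻ y, G y = ∫⁻ u : ℝ, ∫⁻ v : ℝ, G ((EuclideanSpace.equiv (Fin 2) ℝ).symm ![u, v]) := by
  have hm : MeasurePreserving (fun z : ℝ × ℝ => (EuclideanSpace.equiv (Fin 2) ℝ).symm ![z.1, z.2])
      volume volume := by
    have h1 := (PiLp.volume_preserving_toLp (Fin 2)).comp
      ((volume_preserving_finTwoArrow ℝ).symm)
    have h2 : (fun z : ℝ × ℝ => (EuclideanSpace.equiv (Fin 2) ℝ).symm ![z.1, z.2]) =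
        WithLp.toLp 2 ∘ ⇑(MeasurableEquiv.finTwoArrow (α := ℝ)).symm := by
      funext z
      ext i
      fin_cases i <;> rfl
    rw [h2]
    exact h1
  rw [← hm.lintegral_comp hG, Measure.volume_eq_prod, lintegral_prod]
  exact (hG.comp hm.measurable).aemeasurable

theorem polar_plane (G : EuclideanSpace ℝ (Fin 2) → ℝ≥0∞) (hG : Measurable G) :
    ∫⁻ y, G y = ∫⁻ r in Ioi (0:ℝ), ∫⁻ θ in Ioc (0 : ℝ) (2 * Real.pi),
      ENNReal.ofReal r * G (r • unitVec θ) := by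
  have hm : MeasurePreserving (fun z : ℝ × ℝ => (EuclideanSpace.equiv (Fin 2) ℝ).symm ![z.1, z.2])
      volume volume := by
    have h1 := (PiLp.volume_preserving_toLp (Fin 2)).comp
      ((volume_preserving_finTwoArrow ℝ).symm)
    have h2 : (fun z : ℝ × ℝ => (EuclideanSpace.equiv (Fin 2) ℝ).symm ![z.1, z.2]) =
        WithLp.toLp 2 ∘ ⇑(MeasurableEquiv.finTwoArrow (α := ℝ)).symm := by
      funext z
      ext i
      fin_cases i <;> rfl
    rw [h2]
    exact h1
  have hu : Measurable unitVec := by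
    have : Measurable (fun θ : ℝ => (Real.cos θ, Real.sin θ)) := by fun_prop
    exact hm.measurable.comp this
  rw [← hm.lintegral_comp hG, ← lintegral_comp_polarCoord_symm, polarCoord_target,
    Measure.volume_eq_prod]
  have e : ∀ p : ℝ × ℝ, ENNReal.ofReal p.1 • G ((EuclideanSpace.equiv (Fin 2) ℝ).symm
      ![(polarCoord.symm p).1, (polarCoord.symm p).2]) =
      ENNReal.ofReal p.1 * G (p.1 • unitVec p.2) := by
    intro p
    rw [smul_eq_mul]
    congr 2
    ext i
    fin_cases i <;> simp [unitVec, polarCoord]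
  simp only [e]
  rw [setLIntegral_prod]
  · refine lintegral_congr fun r => ?_
    dsimp only
    rw [setLIntegral_congr Ioo_ae_eq_Ioc]
    have h2 := (isAddFundamentalDomain_Ioc (T := 2 * Real.pi) (by positivity) (-Real.pi)).setLIntegral_eq
      (isAddFundamentalDomain_Ioc (T := 2 * Real.pi) (by positivity) 0)
      (fun θ => ENNReal.ofReal r * G (r • unitVec θ)) ?_
    · rw [show -Real.pi + 2 * Real.pi = Real.pi by ring, zero_add] at h2
      exact h2
    · rintro ⟨g, hg⟩ θ
      obtain ⟨n, rfl⟩ := AddSubgroup.mem_zmultiples_iff.1 hg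
      have : unitVec (n • (2 * Real.pi) + θ) = unitVec θ := by
        unfold unitVec
        rw [add_comm, zsmul_eq_mul, Real.cos_add_int_mul_two_pi, Real.sin_add_int_mul_two_pi]
      show ENNReal.ofReal r * G (r • unitVec (n • (2 * Real.pi) + θ)) = _
      rw [this]
  · refine Measurable.aemeasurable ?_
    refine (by fun_prop : Measurable fun p : ℝ × ℝ => ENNReal.ofReal p.1).mul (hG.comp ?_)
    exact measurable_fst.smul (hu.comp measurable_snd)

theorem measurable_unitVec : Measurable unitVec := by
  unfold unitVec
  have : Continuous fun θ : ℝ => (EuclideanSpace.equiv (Fin 2) ℝ).symm ![Real.cos θ, Real.sin θ] := by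
    refine (EuclideanSpace.equiv (Fin 2) ℝ).symm.continuous.comp ?_
    refine continuous_pi fun i => ?_
    fin_cases i
    · simpa using Real.continuous_cos
    · simpa using Real.continuous_sin
  exact this.measurable

theorem norm_unitVec (θ : ℝ) : ‖unitVec θ‖ = 1 := by
  rw [EuclideanSpace.norm_eq]
  simp [unitVec]

theorem polar_ball (G : EuclideanSpace ℝ (Fin 2) → ℝ≥0∞) (hG : Measurable G)
    (x : EuclideanSpace ℝ (Fin 2)) (T : ℝ) :
    ∫⁻ y in {y | dist y x ≤ T}, G y = ∫⁻ r in Ioc (0:ℝ) T, ∫⁻ θ in Ioc (0 : ℝ) (2 * Real.pi),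
      ENNReal.ofReal r * G (x + r • unitVec θ) := by
  have hS : MeasurableSet {y | dist y x ≤ T} := measurableSet_le (by fun_prop) measurable_const
  rw [← lintegral_indicator hS, ← lintegral_add_left_eq_self _ x, polar_plane]
  · rw [show Ioc (0:ℝ) T = Iic T ∩ Ioi 0 by ext; simp [and_comm],
      ← Measure.restrict_restrict measurableSet_Iic, ← lintegral_indicator measurableSet_Iic]
    refine setLIntegral_congr_fun measurableSet_Ioi fun r hr => ?_
    have hr : 0 < r := hr
    by_cases h : r ≤ T
    · simp [indicator, norm_smul, norm_unitVec, abs_of_pos hr, h]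
    · simp [indicator, norm_smul, norm_unitVec, abs_of_pos hr, h]
  · exact (hG.indicator hS).comp (by fun_prop)

theorem cone_polar (F : ℝ × EuclideanSpace ℝ (Fin 2) → ℝ≥0∞) (hF : Measurable F)
    (x : EuclideanSpace ℝ (Fin 2)) (t : ℝ) :
    ∫⁻ s in Ioc (0:ℝ) t, ∫⁻ y in {y | dist y x ≤ t - s}, F (s, y) =
    ∫⁻ a in Ioc (0:ℝ) t, ∫⁻ s in Ioc (0:ℝ) a, ∫⁻ θ in Ioc (0 : ℝ) (2 * Real.pi),
      ENNReal.ofReal (a - s) * F (s, x + (a - s) • unitVec θ) := by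
  have hu := measurable_unitVec
  set H : ℝ → ℝ → ℝ≥0∞ := fun a s => ∫⁻ θ in Ioc (0 : ℝ) (2 * Real.pi),
      ENNReal.ofReal (a - s) * F (s, x + (a - s) • unitVec θ) with hH
  have hHm : Measurable (fun z : ℝ × ℝ => H z.1 z.2) := by
    simp only [hH]
    refine Measurable.lintegral_prod_right' (f := fun w : (ℝ × ℝ) × ℝ => 
      ENNReal.ofReal (w.1.1 - w.1.2) * F (w.1.2, x + (w.1.1 - w.1.2) • unitVec w.2)) ?_
    fun_prop
  have h1 : ∀ s, ∫⁻ y in {y | dist y x ≤ t - s}, F (s, y) =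
      ∫⁻ a, (Ioc s t).indicator (fun a => H a s) a := by
    intro s
    rw [polar_ball _ (by fun_prop), ← lintegral_indicator measurableSet_Ioc,
      ← lintegral_sub_right_eq_self _ s]
    refine lintegral_congr fun a => ?_
    simp only [indicator, mem_Ioc, sub_pos, sub_le_sub_iff_right, hH]
  have hset : MeasurableSet {z : ℝ × ℝ | 0 < z.1 ∧ z.1 < z.2 ∧ z.2 ≤ t} := by measurability
  simp only [h1]
  rw [← lintegral_indicator measurableSet_Ioc]
  have h2 : ∀ s, (Ioc 0 t).indicator (fun s => ∫⁻ a, (Ioc s t).indicator (fun a => H a s) a) s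
      = ∫⁻ a, {z : ℝ × ℝ | 0 < z.1 ∧ z.1 < z.2 ∧ z.2 ≤ t}.indicator (fun z => H z.2 z.1) (s, a) := by
    intro s
    by_cases hs : s ∈ Ioc 0 t
    · rw [indicator_of_mem hs]
      refine lintegral_congr fun a => ?_
      have := hs.1
      simp [indicator, this]
    · rw [indicator_of_notMem hs, lintegral_eq_zero_of_ae_eq_zero]
      refine Filter.Eventually.of_forall fun a => ?_
      refine indicator_of_notMem ?_ _
      rintro ⟨h1, h2, h3⟩
      exact hs ⟨h1, by dsimp only at *; linarith⟩
  simp only [h2]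
  rw [lintegral_lintegral_swap]
  · rw [← lintegral_indicator measurableSet_Ioc]
    refine lintegral_congr fun a => ?_
    by_cases ha : a ∈ Ioc 0 t
    · rw [indicator_of_mem ha, ← lintegral_indicator measurableSet_Ioc]
      refine lintegral_congr fun s => ?_
      have := ha.2
      simp only [indicator, mem_ofPred_eq, this, and_true, mem_Ioc]
      rcases lt_trichotomy s a with h | h | h
      · simp only [h, h.le, and_true]
        rfl
      · subst h
        simp
      · simp [h.not_gt, h.not_ge]
    · rw [indicator_of_notMem ha, lintegral_eq_zero_of_ae_eq_zero]
      refine Filter.Eventually.of_forall fun s => ?_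
      refine indicator_of_notMem ?_ _
      rintro ⟨h1, h2, h3⟩
      exact ha ⟨by dsimp only at *; linarith, h3⟩
  · refine Measurable.aemeasurable ?_
    exact Measurable.indicator (f := fun z : ℝ × ℝ => H z.2 z.1) (hHm.comp measurable_swap) hset

/-- The weighted flux bound. -/
theorem flux_weight (Kg : ℝ → EuclideanSpace ℝ (Fin 2) → ℝ) (hK : Measurable (Function.uncurry Kg))
    (x : EuclideanSpace ℝ (Fin 2)) (t : ℝ) (Cf : ℝ)
    (hflux : ∀ a, 0 ≤ a → a ≤ t → coneFlux Kg a x ≤ ENNReal.ofReal Cf)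
    (W : ℝ → ℝ≥0∞) (hW : Measurable W) :
    ∫⁻ s in Ioc (0:ℝ) t, ∫⁻ y in {y | dist y x ≤ t - s},
      ENNReal.ofReal (Kg s y ^ 2) * W (t - s - dist y x) ≤
    ENNReal.ofReal Cf * ∫⁻ e in Ico (0:ℝ) t, W e := by
  have hK' : Measurable fun z : ℝ × EuclideanSpace ℝ (Fin 2) => Kg z.1 z.2 := hK
  rw [cone_polar (fun z => ENNReal.ofReal (Kg z.1 z.2 ^ 2) * W (t - z.1 - dist z.2 x)) (by fun_prop)]
  have h1 : ∫⁻ e in Ico (0:ℝ) t, W e = ∫⁻ a in Ioc (0:ℝ) t, W (t - a) := by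
    rw [← lintegral_indicator measurableSet_Ico, ← lintegral_indicator measurableSet_Ioc,
      ← lintegral_sub_left_eq_self _ t]
    refine lintegral_congr fun a => ?_
    simp only [indicator, mem_Ico, mem_Ioc, sub_nonneg]
    by_cases h : 0 < a <;> by_cases h' : a ≤ t <;> simp [h, h']
  rw [h1, ← lintegral_const_mul _ (by fun_prop)]
  refine setLIntegral_mono' measurableSet_Ioc fun a ha => ?_
  refine le_trans ?_ (mul_le_mul_left (hflux a ha.1.le ha.2) (W (t - a)))
  unfold coneFlux
  rw [← lintegral_mul_const'']
  swap
  · have hu := measurable_unitVec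
    refine Measurable.aemeasurable ?_
    refine Measurable.lintegral_prod_right' (f := fun w : ℝ × ℝ => 
      ENNReal.ofReal ((a - w.1) * Kg w.1 (x + (a - w.1) • unitVec w.2) ^ 2)) ?_
    have : Measurable fun w : ℝ × ℝ => Kg w.1 (x + (a - w.1) • unitVec w.2) :=
      hK'.comp (by fun_prop : Measurable fun w : ℝ × ℝ => (w.1, x + (a - w.1) • unitVec w.2))
    fun_prop
  refine le_of_eq ?_
  refine setLIntegral_congr_fun measurableSet_Ioc fun s hs => ?_
  have hu := measurable_unitVec
  have has : 0 ≤ a - s := sub_nonneg.2 hs.2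
  have hmm : Measurable fun θ => Kg s (x + (a - s) • unitVec θ) :=
    hK'.comp (by fun_prop : Measurable fun θ => (s, x + (a - s) • unitVec θ))
  dsimp only
  rw [← lintegral_mul_const _ (by fun_prop)]
  refine lintegral_congr fun θ => ?_
  have : dist (x + (a - s) • unitVec θ) x = a - s := by
    simp [norm_smul, norm_unitVec, abs_of_nonneg has]
  rw [this, ENNReal.ofReal_mul has, mul_assoc]
  congr 3
  ring

theorem ball_radial (x : EuclideanSpace ℝ (Fin 2)) (T : ℝ) (W : ℝ → ℝ≥0∞) (hW : Measurable W) :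
    ∫⁻ y in {y | dist y x ≤ T}, W (T - dist y x) ≤
      ENNReal.ofReal (2 * Real.pi * T) * ∫⁻ e in Ico (0:ℝ) T, W e := by
  rw [polar_ball _ (by fun_prop)]
  have h1 : ∫⁻ e in Ico (0:ℝ) T, W e = ∫⁻ a in Ioc (0:ℝ) T, W (T - a) := by
    rw [← lintegral_indicator measurableSet_Ico, ← lintegral_indicator measurableSet_Ioc,
      ← lintegral_sub_left_eq_self _ T]
    refine lintegral_congr fun a => ?_
    simp only [indicator, mem_Ico, mem_Ioc, sub_nonneg]
    by_cases h : 0 < a <;> by_cases h' : a ≤ T <;> simp [h, h']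
  rw [h1, ← lintegral_const_mul _ (by fun_prop)]
  refine setLIntegral_mono' measurableSet_Ioc fun r hr => ?_
  have : ∀ θ, dist (x + r • unitVec θ) x = r := by
    intro θ; simp [norm_smul, norm_unitVec, abs_of_pos hr.1]
  simp only [this, lintegral_const, Measure.restrict_apply MeasurableSet.univ, univ_inter,
    Real.volume_Ioc, sub_zero]
  rw [mul_comm, ← mul_assoc, ← ENNReal.ofReal_mul (by positivity)]
  gcongr
  exact hr.2

theorem pZero_pos (p : EuclideanSpace ℝ (Fin 2)) : 0 < pZero p := by
  unfold pZero; positivity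

theorem pZero_sq (p : EuclideanSpace ℝ (Fin 2)) : pZero p ^ 2 = 1 + ‖p‖ ^ 2 := by
  unfold pZero; exact Real.sq_sqrt (by positivity)

theorem measurable_pZero : Measurable pZero := by
  unfold pZero; fun_prop

theorem exists_basis (ξ : EuclideanSpace ℝ (Fin 2)) :
    ∃ b : OrthonormalBasis (Fin 2) ℝ (EuclideanSpace ℝ (Fin 2)),
      ∀ p, |⟪p, ξ⟫| ≤ ‖ξ‖ * |b.repr p 0| := by
  by_cases h : ξ = 0
  · exact ⟨EuclideanSpace.basisFun (Fin 2) ℝ, fun p => by simp [h]⟩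
  · have hn : ‖ξ‖ ≠ 0 := norm_ne_zero_iff.2 h
    obtain ⟨b, hb⟩ := Orthonormal.exists_orthonormalBasis_extension_of_card_eq (𝕜 := ℝ)
      (E := EuclideanSpace ℝ (Fin 2)) (ι := Fin 2) (by simp) (v := fun _ => ‖ξ‖⁻¹ • ξ) (s := {0}) (by
        constructor
        · intro i
          simp [norm_smul, hn]
        · rintro ⟨i, hi⟩ ⟨j, hj⟩ hij
          exfalso; apply hij
          simp only [mem_singleton_iff] at hi hj
          simp [hi, hj])
    refine ⟨b, fun p => ?_⟩
    have h0 := hb 0 rfl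
    rw [b.repr_apply_apply, h0, real_inner_smul_left, abs_mul, abs_inv, abs_norm, ← mul_assoc,
      mul_inv_cancel₀ hn, one_mul, real_inner_comm]

theorem pZero_mul (p ξ : EuclideanSpace ℝ (Fin 2)) :
    pZero p * (1 + ⟪pHat p, ξ⟫) = pZero p + ⟪p, ξ⟫ := by
  have := (pZero_pos p).ne'
  unfold pHat
  rw [real_inner_smul_left]
  field_simp

theorem kernel_bound (p ξ : EuclideanSpace ℝ (Fin 2)) (hξ : ‖ξ‖ < 1)
    (b : OrthonormalBasis (Fin 2) ℝ (EuclideanSpace ℝ (Fin 2)))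
    (hb : |⟪p, ξ⟫| ≤ ‖ξ‖ * |b.repr p 0|) (β : ℝ) (h0 : 0 ≤ β) (h1 : β ≤ 2 / 5) :
    0 < pZero p * (1 + ⟪pHat p, ξ⟫) ∧
    (pZero p * (1 + ⟪pHat p, ξ⟫))⁻¹ ≤
      2 * (1 - ‖ξ‖) ^ (-β) * pZero p ^ (1 - 2 * β) * (1 + ‖b.repr p 1‖ ^ 2) ^ (-(6 / 5 : ℝ) / 2) := by
  rw [pZero_mul]
  set u := b.repr p 0
  set v := b.repr p 1
  have hn : pZero p ^ 2 = 1 + (u ^ 2 + v ^ 2) := by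
    rw [pZero_sq, ← b.repr.norm_map p, EuclideanSpace.norm_sq_eq]
    simp [u, v]
  have hp := pZero_pos p
  set P := pZero p
  set D := P + ⟪p, ξ⟫
  have hD : P - ‖ξ‖ * |u| ≤ D := by
    have := neg_abs_le ⟪p, ξ⟫
    simp only [D]; linarith
  have hu : |u| ≤ P := abs_le_of_sq_le_sq (by nlinarith [sq_nonneg v]) hp.le
  have hξ0 := norm_nonneg ξ
  have hu0 := abs_nonneg u
  have hδ : 0 < 1 - ‖ξ‖ := by linarith
  have e1 : (1 - ‖ξ‖) * P ≤ D := by nlinarith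
  have e2 : (1 + v ^ 2) / (2 * P) ≤ D := by
    rw [div_le_iff₀ (by positivity)]
    have : P - |u| ≤ D := by nlinarith
    have h3 : (P - |u|) * (P + |u|) = 1 + v ^ 2 := by
      have := sq_abs u
      nlinarith
    nlinarith
  have hDp : 0 < D := lt_of_lt_of_le (by positivity) e1
  refine ⟨hDp, ?_⟩
  have hv : 0 < 1 + v ^ 2 := by positivity
  have e3 : ((1 + v ^ 2) / (2 * P)) ^ (1 - β) * ((1 - ‖ξ‖) * P) ^ β ≤ D := by
    calc _ ≤ D ^ (1 - β) * D ^ β := by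
          gcongr
          linarith
      _ = D := by rw [← Real.rpow_add hDp]; simp
  refine (inv_anti₀ (by positivity) e3).trans ?_
  rw [mul_inv, ← Real.rpow_neg (by positivity), ← Real.rpow_neg (by positivity),
    Real.div_rpow (by positivity) (by positivity), Real.mul_rpow (by positivity) (by positivity),
    Real.mul_rpow (by positivity) (by positivity)]
  have g1 : (1 + v ^ 2) ^ (-(1 - β)) ≤ (1 + v ^ 2) ^ (-(6 / 5 : ℝ) / 2) :=
    Real.rpow_le_rpow_of_exponent_le (by nlinarith [sq_nonneg v]) (by linarith)
  have g2 : (2 : ℝ) ^ (1 - β) ≤ 2 := by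
    calc (2 : ℝ) ^ (1 - β) ≤ 2 ^ (1 : ℝ) :=
          Real.rpow_le_rpow_of_exponent_le (by norm_num) (by linarith)
      _ = 2 := by simp
  have g3 : P ^ (1 - 2 * β) = P ^ (1 - β) * P ^ (-β) := by
    rw [← Real.rpow_add hp]; congr 1; ring
  rw [g3, Real.norm_eq_abs, sq_abs]
  have g4 : (2 : ℝ) ^ (-(1 - β)) = (2 ^ (1 - β))⁻¹ := Real.rpow_neg (by norm_num) _
  have g5 : P ^ (-(1 - β)) = (P ^ (1 - β))⁻¹ := Real.rpow_neg hp.le _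
  rw [g4, g5]
  calc _ = 2 ^ (1 - β) * (1 - ‖ξ‖) ^ (-β) * (P ^ (1 - β) * P ^ (-β)) * (1 + v ^ 2) ^ (-(1 - β)) := by
        field_simp
    _ ≤ _ := by gcongr

/-- The one-dimensional constant. -/
noncomputable def HH : ℝ := ∫ v : ℝ, (1 + ‖v‖ ^ 2) ^ (-(6 / 5 : ℝ) / 2)

theorem HH_nonneg : 0 ≤ HH := integral_nonneg fun v => by positivity

theorem HH_eq : ∫⁻ v : ℝ, ENNReal.ofReal ((1 + ‖v‖ ^ 2) ^ (-(6 / 5 : ℝ) / 2)) = ENNReal.ofReal HH := by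
  unfold HH
  rw [ofReal_integral_eq_lintegral_ofReal]
  · exact integrable_rpow_neg_one_add_norm_sq (by norm_num)
  · exact Filter.Eventually.of_forall fun v => by positivity

theorem ball_int (b : OrthonormalBasis (Fin 2) ℝ (EuclideanSpace ℝ (Fin 2))) (R : ℝ) (hR : 0 < R) :
    ∫⁻ p in {p | pZero p ≤ R}, ENNReal.ofReal ((1 + ‖b.repr p 1‖ ^ 2) ^ (-(6 / 5 : ℝ) / 2)) ≤
      ENNReal.ofReal (2 * R * HH) := by
  have hS : MeasurableSet {p | pZero p ≤ R} := measurableSet_le measurable_pZero measurable_const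
  rw [← lintegral_indicator hS]
  have hG : Measurable ({p | pZero p ≤ R}.indicator fun p : EuclideanSpace ℝ (Fin 2) =>
      ENNReal.ofReal ((1 + ‖p 1‖ ^ 2) ^ (-(6 / 5 : ℝ) / 2))) := by
    refine Measurable.indicator ?_ hS
    fun_prop
  have : ∀ p, ({p | pZero p ≤ R}.indicator fun p =>
      ENNReal.ofReal ((1 + ‖b.repr p 1‖ ^ 2) ^ (-(6 / 5 : ℝ) / 2))) p =
      ({p | pZero p ≤ R}.indicator fun p : EuclideanSpace ℝ (Fin 2) =>
      ENNReal.ofReal ((1 + ‖p 1‖ ^ 2) ^ (-(6 / 5 : ℝ) / 2))) (b.repr p) := by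
    intro p
    simp [indicator, pZero]
  simp only [this]
  rw [b.measurePreserving_repr.lintegral_comp hG, lint_plane _ hG]
  calc _ ≤ ∫⁻ u : ℝ, (Icc (-R) R).indicator (fun _ => ENNReal.ofReal HH) u := by
        refine lintegral_mono fun u => ?_
        by_cases hu : u ∈ Icc (-R) R
        · rw [indicator_of_mem hu, ← HH_eq]
          refine lintegral_mono fun v => ?_
          refine (indicator_le_self _ _ _).trans ?_
          simp
        · rw [indicator_of_notMem hu, lintegral_eq_zero_of_ae_eq_zero]
          refine Filter.Eventually.of_forall fun v => ?_
          refine indicator_of_notMem ?_ _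
          intro h
          apply hu
          have h2 : pZero ((EuclideanSpace.equiv (Fin 2) ℝ).symm ![u, v]) ≤ R := h
          have h3 := pZero_sq ((EuclideanSpace.equiv (Fin 2) ℝ).symm ![u, v])
          rw [EuclideanSpace.norm_sq_eq] at h3
          simp only [EuclideanSpace.equiv, Fin.sum_univ_two] at h3
          simp at h3
          have h2' : pZero !₂[u, v] ≤ R := h2
          have h4 : 0 < pZero !₂[u, v] := pZero_pos _
          have h5 := pZero_pos ((EuclideanSpace.equiv (Fin 2) ℝ).symm ![u, v])
          have := abs_le_of_sq_le_sq (a := u) (b := R) (by nlinarith [sq_nonneg v]) hR.le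
          exact abs_le.1 this
    _ = _ := by
        rw [lintegral_indicator measurableSet_Icc, setLIntegral_const, Real.volume_Icc, mul_comm,
          ← ENNReal.ofReal_mul (by linarith)]
        congr 1; ring

theorem sigma_bound (C₀ : ℝ) (hC₀ : 0 < C₀) (ξ : EuclideanSpace ℝ (Fin 2)) (hξ : ‖ξ‖ < 1)
    (f : EuclideanSpace ℝ (Fin 2) → ℝ) (hf0 : ∀ p, 0 ≤ f p)
    (hfC : ∀ᵐ p, f p ≤ C₀) (β : ℝ) (h0 : 0 ≤ β) (h1 : β ≤ 2 / 5) (n : ℕ) (hn : 2 ≤ n)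
    (hβ : (2 - 2 * β) = 2 / 5 * (n + 1)) :
    ∫⁻ p, ENNReal.ofReal (f p * (pZero p * (1 + ⟪pHat p, ξ⟫))⁻¹) ≤
      ENNReal.ofReal (2 * (2 * C₀ * HH + 1)) * ENNReal.ofReal ((1 - ‖ξ‖) ^ (-β)) *
        (∫⁻ p, ENNReal.ofReal (pZero p ^ n * f p)) ^ ((2 : ℝ) / 5) := by
  obtain ⟨b, hb⟩ := exists_basis ξ
  have hH := HH_nonneg
  have hδ : 0 < 1 - ‖ξ‖ := by linarith
  set m := ∫⁻ p, ENNReal.ofReal (pZero p ^ n * f p) with hm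
  set dd := (1 - ‖ξ‖) ^ (-β) with hdd
  have hdp : 0 < dd := by positivity
  have hpm := measurable_pZero
  have key : ∀ R : ℝ, 0 < R →
      ∫⁻ p, ENNReal.ofReal (f p * (pZero p * (1 + ⟪pHat p, ξ⟫))⁻¹) ≤
      ENNReal.ofReal (2 * dd) * (ENNReal.ofReal (2 * C₀ * HH * R ^ (2 - 2 * β)) +
        ENNReal.ofReal (R ^ (1 - 2 * β - n)) * m) := by
    intro R hR
    have hS : MeasurableSet {p | pZero p ≤ R} := measurableSet_le measurable_pZero measurable_const
    rw [← lintegral_add_compl _ hS, mul_add]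
    refine add_le_add ?_ ?_
    · calc _ ≤ ∫⁻ p in {p | pZero p ≤ R}, ENNReal.ofReal (C₀ * (2 * dd * R ^ (1 - 2 * β))) *
              ENNReal.ofReal ((1 + ‖b.repr p 1‖ ^ 2) ^ (-(6 / 5 : ℝ) / 2)) := by
            refine setLIntegral_mono_ae' hS ?_
            filter_upwards [hfC] with p hp hpR
            have hpR : pZero p ≤ R := hpR
            rw [← ENNReal.ofReal_mul (by positivity)]
            refine ENNReal.ofReal_le_ofReal ?_
            obtain ⟨k1, k2⟩ := kernel_bound p ξ hξ b (hb p) β h0 h1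
            have hpp := pZero_pos p
            have : pZero p ^ (1 - 2 * β) ≤ R ^ (1 - 2 * β) :=
              Real.rpow_le_rpow hpp.le hpR (by linarith)
            calc _ ≤ C₀ * (2 * dd * pZero p ^ (1 - 2 * β) *
                  (1 + ‖b.repr p 1‖ ^ 2) ^ (-(6 / 5 : ℝ) / 2)) := by
                  gcongr
              _ ≤ C₀ * (2 * dd * R ^ (1 - 2 * β) *
                  (1 + ‖b.repr p 1‖ ^ 2) ^ (-(6 / 5 : ℝ) / 2)) := by gcongr
              _ = _ := by ring
        _ ≤ ENNReal.ofReal (C₀ * (2 * dd * R ^ (1 - 2 * β))) * ENNReal.ofReal (2 * R * HH) := by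
            rw [lintegral_const_mul' _ _ ENNReal.ofReal_ne_top]
            gcongr
            exact ball_int b R hR
        _ = _ := by
            rw [← ENNReal.ofReal_mul (by positivity), ← ENNReal.ofReal_mul (by positivity)]
            congr 1
            rw [show 2 - 2 * β = (1 - 2 * β) + 1 by ring, Real.rpow_add_one hR.ne']
            ring
    · calc _ ≤ ∫⁻ p in {p | pZero p ≤ R}ᶜ, ENNReal.ofReal (2 * dd) * ENNReal.ofReal (R ^ (1 - 2 * β - n)) *
              ENNReal.ofReal (pZero p ^ n * f p) := by
            refine setLIntegral_mono' hS.compl fun p hpR => ?_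
            have hpR : R < pZero p := not_le.1 hpR
            rw [← ENNReal.ofReal_mul (by positivity), ← ENNReal.ofReal_mul (by positivity)]
            refine ENNReal.ofReal_le_ofReal ?_
            obtain ⟨k1, k2⟩ := kernel_bound p ξ hξ b (hb p) β h0 h1
            have hpp := pZero_pos p
            have hfp := hf0 p
            have g1 : (1 + ‖b.repr p 1‖ ^ 2) ^ (-(6 / 5 : ℝ) / 2) ≤ 1 := by
              refine Real.rpow_le_one_of_one_le_of_nonpos ?_ (by norm_num)
              nlinarith [sq_nonneg ‖b.repr p 1‖]
            have g2 : pZero p ^ (1 - 2 * β) ≤ R ^ (1 - 2 * β - n) * pZero p ^ n := by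
              have : pZero p ^ (1 - 2 * β) = pZero p ^ (1 - 2 * β - n) * pZero p ^ n := by
                rw [← Real.rpow_natCast, ← Real.rpow_add hpp]; congr 1; ring
              rw [this]
              gcongr ?_ * _
              refine Real.rpow_le_rpow_of_nonpos hR hpR.le ?_
              have : (2 : ℝ) ≤ n := by exact_mod_cast hn
              linarith
            calc _ ≤ f p * (2 * dd * pZero p ^ (1 - 2 * β) * 1) := by
                  gcongr
                  refine k2.trans ?_
                  gcongr
              _ ≤ f p * (2 * dd * (R ^ (1 - 2 * β - n) * pZero p ^ n) * 1) := by gcongr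
              _ = _ := by ring
        _ ≤ _ := by
            rw [lintegral_const_mul' _ _ (by finiteness), mul_assoc]
            gcongr
            exact setLIntegral_le_lintegral _ _
  by_cases htop : m = ⊤
  · rw [htop, ENNReal.top_rpow_of_pos (by norm_num), ENNReal.mul_top]
    · exact le_top
    · simp only [ne_eq, mul_eq_zero, ENNReal.ofReal_eq_zero, not_or, not_le]
      exact ⟨by positivity, hdp⟩
  by_cases hz : m = 0
  · rw [hz, ENNReal.zero_rpow_of_pos (by norm_num), mul_zero]
    rw [hz] at key
    have hlim : Filter.Tendsto (fun R : ℝ => ENNReal.ofReal (2 * dd) *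
        (ENNReal.ofReal (2 * C₀ * HH * R ^ (2 - 2 * β)) +
        ENNReal.ofReal (R ^ (1 - 2 * β - n)) * 0)) (nhdsWithin 0 (Ioi 0)) (nhds 0) := by
      simp only [mul_zero, add_zero]
      have : Filter.Tendsto (fun R : ℝ => ENNReal.ofReal (2 * dd * (2 * C₀ * HH * R ^ (2 - 2 * β))))
          (nhds 0) (nhds (ENNReal.ofReal (2 * dd * (2 * C₀ * HH * 0 ^ (2 - 2 * β))))) := by
        refine ENNReal.tendsto_ofReal (Filter.Tendsto.const_mul _ (Filter.Tendsto.const_mul _ ?_))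
        exact (Real.continuousAt_rpow_const 0 (2 - 2 * β) (Or.inr (by linarith))).tendsto
      rw [Real.zero_rpow (by linarith)] at this
      simp only [mul_zero, ENNReal.ofReal_zero] at this
      refine (this.mono_left nhdsWithin_le_nhds).congr fun R => ?_
      rw [ENNReal.ofReal_mul (by positivity)]
    exact ge_of_tendsto hlim (by
      filter_upwards [self_mem_nhdsWithin] with R hR
      exact key R hR)
  · have hmr : 0 < m.toReal := ENNReal.toReal_pos hz htop
    have hn1 : (0 : ℝ) < n + 1 := by positivity
    refine (key (m.toReal ^ ((1 : ℝ) / (n + 1))) (by positivity)).trans (le_of_eq ?_)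
    conv_lhs => enter [2, 2, 2]; rw [← ENNReal.ofReal_toReal htop]
    conv_rhs => rw [← ENNReal.ofReal_toReal htop]
    rw [← ENNReal.ofReal_mul (by positivity), ← ENNReal.ofReal_add (by positivity) (by positivity),
      ← ENNReal.ofReal_mul (by positivity), ENNReal.ofReal_rpow_of_pos hmr,
      ← ENNReal.ofReal_mul (by positivity), ← ENNReal.ofReal_mul (by positivity)]
    congr 1
    set q := m.toReal
    have a1 : (q ^ ((1 : ℝ) / (n + 1))) ^ (2 - 2 * β) = q ^ ((2 : ℝ) / 5) := by
      rw [← Real.rpow_mul hmr.le, hβ]; congr 1; field_simp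
    have a2 : (q ^ ((1 : ℝ) / (n + 1))) ^ (1 - 2 * β - n) * q = q ^ ((2 : ℝ) / 5) := by
      rw [← Real.rpow_mul hmr.le, ← Real.rpow_add_one hmr.ne']; congr 1
      rw [show 1 - 2 * β - n = 2 / 5 * (n + 1) - (n + 1) by linarith]
      field_simp; ring
    rw [a1, a2]
    ring

theorem pow_int_small (T c r : ℝ) (hc : 0 < c) (hr : -1 < r) :
    ∫⁻ e in Ico (0:ℝ) T, (if e < c then ENNReal.ofReal (e ^ r) else 0) ≤
      ENNReal.ofReal (c ^ (r + 1) / (r + 1)) := by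
  have h1 : ∫⁻ e in Ico (0:ℝ) T, (if e < c then ENNReal.ofReal (e ^ r) else 0) ≤
      ∫⁻ e in Ico (0:ℝ) c, ENNReal.ofReal (e ^ r) := by
    rw [← lintegral_indicator measurableSet_Ico, ← lintegral_indicator measurableSet_Ico]
    refine lintegral_mono fun e => ?_
    by_cases h : 0 ≤ e <;> by_cases h' : e < T <;> by_cases h'' : e < c <;>
      simp [indicator, h, h', h'']
  refine h1.trans ?_
  rw [setLIntegral_congr Ico_ae_eq_Ioc, ← ofReal_integral_eq_lintegral_ofReal]
  · rw [← intervalIntegral.integral_of_le hc.le, integral_rpow (Or.inl hr),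
      Real.zero_rpow (by linarith), sub_zero]
  · exact (intervalIntegrable_iff_integrableOn_Ioc_of_le hc.le).1
      (intervalIntegral.intervalIntegrable_rpow' hr)
  · filter_upwards [ae_restrict_mem measurableSet_Ioc] with e he
    have := he.1
    positivity

theorem pow_int_large (T c r : ℝ) (hc : 0 < c) (hr : r < -1) :
    ∫⁻ e in Ico (0:ℝ) T, (if c ≤ e then ENNReal.ofReal (e ^ r) else 0) ≤
      ENNReal.ofReal (-c ^ (r + 1) / (r + 1)) := by
  have h1 : ∫⁻ e in Ico (0:ℝ) T, (if c ≤ e then ENNReal.ofReal (e ^ r) else 0) ≤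
      ∫⁻ e in Ici c, ENNReal.ofReal (e ^ r) := by
    rw [← lintegral_indicator measurableSet_Ico, ← lintegral_indicator measurableSet_Ici]
    refine lintegral_mono fun e => ?_
    by_cases h : 0 ≤ e <;> by_cases h' : e < T <;> by_cases h'' : c ≤ e <;>
      simp [indicator, h, h', h'']
  refine h1.trans ?_
  rw [← setLIntegral_congr Ioi_ae_eq_Ici, ← ofReal_integral_eq_lintegral_ofReal]
  · rw [integral_Ioi_rpow_of_lt hr hc]
  · exact integrableOn_Ioi_rpow_of_lt hr hc
  · filter_upwards [ae_restrict_mem measurableSet_Ioi] with e he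
    have : 0 < e := hc.trans he
    positivity

theorem holder3 {α : Type*} [MeasurableSpace α] (μ : Measure α) (A B C : α → ℝ≥0∞)
    (hA : Measurable A) (hB : Measurable B) (hC : Measurable C) :
    ∫⁻ z, A z ^ ((1 : ℝ) / 2) * B z ^ ((2 : ℝ) / 5) * C z ^ ((1 : ℝ) / 10) ∂μ ≤
      (∫⁻ z, A z ∂μ) ^ ((1 : ℝ) / 2) * (∫⁻ z, B z ∂μ) ^ ((2 : ℝ) / 5) *
        (∫⁻ z, C z ∂μ) ^ ((1 : ℝ) / 10) := by
  have h := ENNReal.lintegral_prod_norm_pow_le (μ := μ) (Finset.univ : Finset (Fin 3))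
    (f := ![A, B, C]) (p := ![(1 : ℝ) / 2, (2 : ℝ) / 5, (1 : ℝ) / 10])
    (by
      intro i _
      fin_cases i
      · exact hA.aemeasurable
      · exact hB.aemeasurable
      · exact hC.aemeasurable)
    (by simp [Fin.sum_univ_three]; norm_num)
    (by intro i _; fin_cases i <;> norm_num)
  simpa [Fin.prod_univ_three] using h

theorem iter_eq (F : ℝ × EuclideanSpace ℝ (Fin 2) → ℝ≥0∞) (hF : Measurable F)
    (x : EuclideanSpace ℝ (Fin 2)) (t : ℝ) :
    ∫⁻ s in Ioc (0:ℝ) t, ∫⁻ y in {y | dist y x ≤ t - s}, F (s, y) =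
    ∫⁻ z in {z : ℝ × EuclideanSpace ℝ (Fin 2) | z.1 ∈ Ioc 0 t ∧ dist z.2 x ≤ t - z.1}, F z := by
  have hS : MeasurableSet {z : ℝ × EuclideanSpace ℝ (Fin 2) | z.1 ∈ Ioc 0 t ∧ dist z.2 x ≤ t - z.1} :=
    (measurable_fst measurableSet_Ioc).inter
      (measurableSet_le (f := fun z : ℝ × EuclideanSpace ℝ (Fin 2) => dist z.2 x)
        (g := fun z : ℝ × EuclideanSpace ℝ (Fin 2) => t - z.1) (by fun_prop) (by fun_prop))
  rw [← lintegral_indicator hS, Measure.volume_eq_prod, lintegral_prod _ (hF.indicator hS).aemeasurable,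
    ← lintegral_indicator measurableSet_Ioc]
  refine lintegral_congr fun s => ?_
  by_cases hs : s ∈ Ioc 0 t
  · rw [indicator_of_mem hs, ← lintegral_indicator (measurableSet_le (by fun_prop) measurable_const)]
    refine lintegral_congr fun y => ?_
    have h1 := hs.1
    have h2 := hs.2
    simp [indicator, h1, h2]
  · rw [indicator_of_notMem hs, lintegral_eq_zero_of_ae_eq_zero]
    exact Filter.Eventually.of_forall fun y => indicator_of_notMem (fun h => hs h.1) _

theorem ptE (K S w c dl : ℝ) (hK : 0 ≤ K) (hS : 0 < S) (hw : 0 ≤ w) (hc : 0 ≤ c)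
    (D M : ℝ≥0∞)
    (h : K / S * dl ≤ (K ^ 2 * w) ^ ((1 : ℝ) / 2) * S⁻¹ ^ ((2 : ℝ) / 5) * c ^ ((1 : ℝ) / 10)) :
    ENNReal.ofReal (K / S) * (D * ENNReal.ofReal dl * M ^ ((2 : ℝ) / 5)) ≤
      D * ((ENNReal.ofReal (K ^ 2) * ENNReal.ofReal w) ^ ((1 : ℝ) / 2) *
        (M / ENNReal.ofReal S) ^ ((2 : ℝ) / 5) * ENNReal.ofReal c ^ ((1 : ℝ) / 10)) := by
  rw [← ENNReal.ofReal_mul (by positivity), div_eq_mul_inv M, ← ENNReal.ofReal_inv_of_pos hS,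
    ENNReal.mul_rpow_of_nonneg _ _ (by norm_num : (0:ℝ) ≤ 2 / 5),
    ENNReal.ofReal_rpow_of_nonneg (by positivity) (by norm_num),
    ENNReal.ofReal_rpow_of_nonneg (by positivity) (by norm_num),
    ENNReal.ofReal_rpow_of_nonneg (by positivity) (by norm_num)]
  calc _ = D * M ^ ((2 : ℝ) / 5) * ENNReal.ofReal (K / S * dl) := by
        rw [ENNReal.ofReal_mul (by positivity)]; ring
    _ ≤ D * M ^ ((2 : ℝ) / 5) * ENNReal.ofReal
        ((K ^ 2 * w) ^ ((1 : ℝ) / 2) * S⁻¹ ^ ((2 : ℝ) / 5) * c ^ ((1 : ℝ) / 10)) := by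
        gcongr
    _ = _ := by
        rw [ENNReal.ofReal_mul (by positivity), ENNReal.ofReal_mul (by positivity)]; ring

theorem real_pt1 (K e τ ρ : ℝ) (hK : 0 ≤ K) (he : 0 < e) (hτ : 0 < τ) (hρ : τ ≤ ρ) :
    K / Real.sqrt (e * ρ) * (e / τ) ^ (-(2 / 5) : ℝ) ≤
      (K ^ 2 * (e ^ (-(11 / 10) : ℝ) * τ ^ ((1 : ℝ) / 5))) ^ ((1 : ℝ) / 2) *
      (Real.sqrt (e * ρ))⁻¹ ^ ((2 : ℝ) / 5) * (e ^ (-(3 / 2) : ℝ)) ^ ((1 : ℝ) / 10) := by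
  have hρ0 : 0 < ρ := by linarith
  have k1 : (K ^ 2) ^ ((1 : ℝ) / 2) = K := by
    rw [← Real.sqrt_eq_rpow, Real.sqrt_sq hK]
  have k2 : (Real.sqrt (e * ρ))⁻¹ = e ^ (-(1 / 2) : ℝ) * ρ ^ (-(1 / 2) : ℝ) := by
    rw [Real.sqrt_eq_rpow, ← Real.rpow_neg (by positivity), Real.mul_rpow he.le hρ0.le]
  rw [Real.mul_rpow (by positivity) (by positivity), Real.mul_rpow (by positivity) (by positivity),
    k1, div_eq_mul_inv K, k2, Real.mul_rpow (by positivity) (by positivity),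
    Real.div_rpow he.le hτ.le, div_eq_mul_inv (e ^ (-(2 / 5) : ℝ)), ← Real.rpow_neg hτ.le,
    ← Real.rpow_mul he.le, ← Real.rpow_mul he.le, ← Real.rpow_mul he.le, ← Real.rpow_mul hτ.le,
    ← Real.rpow_mul hρ0.le]
  have a1 : e ^ (-(1 / 2) : ℝ) * e ^ (-(2 / 5) : ℝ) = e ^ (-(9 / 10) : ℝ) := by
    rw [← Real.rpow_add he]; norm_num
  have a2 : e ^ (-(11 / 10) * (1 / 2) : ℝ) * e ^ (-(1 / 2) * (2 / 5) : ℝ) * e ^ (-(3 / 2) * (1 / 10) : ℝ)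
      = e ^ (-(9 / 10) : ℝ) := by
    rw [← Real.rpow_add he, ← Real.rpow_add he]; norm_num
  have a3 : ρ ^ (-(1 / 2) : ℝ) * τ ^ (- -(2 / 5) : ℝ) ≤
      ρ ^ (-(1 / 2) * (2 / 5) : ℝ) * τ ^ ((1 : ℝ) / 5 * (1 / 2)) := by
    have b1 : ρ ^ (-(1 / 2) : ℝ) = ρ ^ (-(1 / 2) * (2 / 5) : ℝ) * ρ ^ (-(3 / 10) : ℝ) := by
      rw [← Real.rpow_add hρ0]; norm_num
    have b2 : τ ^ (- -(2 / 5) : ℝ) = τ ^ ((1 : ℝ) / 5 * (1 / 2)) * τ ^ ((3 : ℝ) / 10) := by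
      rw [← Real.rpow_add hτ]; norm_num
    have b3 : ρ ^ (-(3 / 10) : ℝ) * τ ^ ((3 : ℝ) / 10) ≤ 1 := by
      rw [Real.rpow_neg hρ0.le, inv_mul_le_one₀ (by positivity)]
      gcongr
    calc _ = ρ ^ (-(1 / 2) * (2 / 5) : ℝ) * τ ^ ((1 : ℝ) / 5 * (1 / 2)) *
          (ρ ^ (-(3 / 10) : ℝ) * τ ^ ((3 : ℝ) / 10)) := by rw [b1, b2]; ring
      _ ≤ ρ ^ (-(1 / 2) * (2 / 5) : ℝ) * τ ^ ((1 : ℝ) / 5 * (1 / 2)) * 1 := by gcongr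
      _ = _ := mul_one _
  calc _ = K * (e ^ (-(1 / 2) : ℝ) * e ^ (-(2 / 5) : ℝ)) * (ρ ^ (-(1 / 2) : ℝ) * τ ^ (- -(2 / 5) : ℝ)) := by
        ring
    _ ≤ K * (e ^ (-(11 / 10) * (1 / 2) : ℝ) * e ^ (-(1 / 2) * (2 / 5) : ℝ) * e ^ (-(3 / 2) * (1 / 10) : ℝ)) *
        (ρ ^ (-(1 / 2) * (2 / 5) : ℝ) * τ ^ ((1 : ℝ) / 5 * (1 / 2))) := by
        rw [a1, a2]; gcongr
    _ = _ := by ring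

theorem real_pt2 (K e τ ρ ε : ℝ) (hK : 0 ≤ K) (he : 0 < e) (hτ : 0 < τ) (hρ : τ ≤ ρ)
    (heε : e ≤ ε * τ) :
    K / Real.sqrt (e * ρ) * 1 ≤
      (K ^ 2 * e ^ (-(4 / 5) : ℝ)) ^ ((1 : ℝ) / 2) *
      (Real.sqrt (e * ρ))⁻¹ ^ ((2 : ℝ) / 5) * (ε * τ ^ (-2 : ℝ)) ^ ((1 : ℝ) / 10) := by
  have hρ0 : 0 < ρ := by linarith
  have k1 : (K ^ 2) ^ ((1 : ℝ) / 2) = K := by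
    rw [← Real.sqrt_eq_rpow, Real.sqrt_sq hK]
  have k2 : (Real.sqrt (e * ρ))⁻¹ = e ^ (-(1 / 2) : ℝ) * ρ ^ (-(1 / 2) : ℝ) := by
    rw [Real.sqrt_eq_rpow, ← Real.rpow_neg (by positivity), Real.mul_rpow he.le hρ0.le]
  have k3 : (e * ρ ^ (-3 : ℝ)) ^ ((1 : ℝ) / 10) ≤ (ε * τ ^ (-2 : ℝ)) ^ ((1 : ℝ) / 10) := by
    refine Real.rpow_le_rpow (by positivity) ?_ (by norm_num)
    calc e * ρ ^ (-3 : ℝ) ≤ (ε * τ) * τ ^ (-3 : ℝ) := by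
          refine mul_le_mul heε (Real.rpow_le_rpow_of_nonpos hτ hρ (by norm_num)) (by positivity) ?_
          linarith
      _ = ε * (τ ^ (1 : ℝ) * τ ^ (-3 : ℝ)) := by rw [Real.rpow_one]; ring
      _ = _ := by rw [← Real.rpow_add hτ]; norm_num
  refine le_trans (le_of_eq ?_) (mul_le_mul_of_nonneg_left k3 (by positivity))
  rw [Real.mul_rpow (by positivity) (by positivity), Real.mul_rpow (by positivity) (by positivity),
    k1, div_eq_mul_inv K, k2, Real.mul_rpow (by positivity) (by positivity),
    ← Real.rpow_mul he.le, ← Real.rpow_mul he.le, ← Real.rpow_mul hρ0.le, ← Real.rpow_mul hρ0.le]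
  have a1 : e ^ (-(1 / 2) : ℝ) = e ^ (-(4 / 5) * (1 / 2) : ℝ) * e ^ (-(1 / 2) * (2 / 5) : ℝ) *
      e ^ ((1 : ℝ) / 10) := by
    rw [← Real.rpow_add he, ← Real.rpow_add he]; norm_num
  have a2 : ρ ^ (-(1 / 2) : ℝ) = ρ ^ (-(1 / 2) * (2 / 5) : ℝ) * ρ ^ (-3 * (1 / 10) : ℝ) := by
    rw [← Real.rpow_add hρ0]; norm_num
  rw [a1, a2]
  ring

/-- Flux weight on the region away from the cone. -/
noncomputable def W1 (ε t e : ℝ) : ℝ≥0∞ :=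
  ENNReal.ofReal (ε ^ (-(1 / 5) : ℝ)) * (if e < ε * t then ENNReal.ofReal (e ^ (-(9 / 10) : ℝ)) else 0) +
  ENNReal.ofReal (t ^ ((1 : ℝ) / 5)) * (if ε * t ≤ e then ENNReal.ofReal (e ^ (-(11 / 10) : ℝ)) else 0)

/-- Flux weight on the region near the cone. -/
noncomputable def W2 (ε t e : ℝ) : ℝ≥0∞ :=
  if e < ε * t then ENNReal.ofReal (e ^ (-(4 / 5) : ℝ)) else 0

/-- Volume weight on the region away from the cone. -/
noncomputable def V1 (ε τ e : ℝ) : ℝ≥0∞ :=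
  if ε * τ ≤ e then ENNReal.ofReal (e ^ (-(3 / 2) : ℝ)) else 0

/-- Volume weight on the region near the cone. -/
noncomputable def V2 (ε τ e : ℝ) : ℝ≥0∞ :=
  ENNReal.ofReal (ε * τ ^ (-2 : ℝ)) * (if e < ε * τ then ENNReal.ofReal (e ^ (0 : ℝ)) else 0)

theorem W1_meas (ε t : ℝ) : Measurable (W1 ε t) := by
  unfold W1
  refine Measurable.add (Measurable.const_mul ?_ _) (Measurable.const_mul ?_ _)
  · exact Measurable.ite (measurableSet_lt measurable_id measurable_const) (by fun_prop) (by fun_prop)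
  · exact Measurable.ite (measurableSet_le measurable_const measurable_id) (by fun_prop) (by fun_prop)

theorem W2_meas (ε t : ℝ) : Measurable (W2 ε t) := by
  unfold W2
  exact Measurable.ite (measurableSet_lt measurable_id measurable_const) (by fun_prop) (by fun_prop)

theorem V1_meas (ε : ℝ) : Measurable fun z : ℝ × ℝ => V1 ε z.1 z.2 := by
  unfold V1
  exact Measurable.ite (measurableSet_le (by fun_prop) (by fun_prop)) (by fun_prop) (by fun_prop)

theorem V2_meas (ε : ℝ) : Measurable fun z : ℝ × ℝ => V2 ε z.1 z.2 := by
  unfold V2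
  have h1 : Measurable fun z : ℝ × ℝ => ENNReal.ofReal (ε * z.1 ^ (-2 : ℝ)) :=
    ENNReal.measurable_ofReal.comp ((measurable_fst.pow_const _).const_mul _)
  refine Measurable.mul h1 ?_
  exact Measurable.ite (measurableSet_lt (by fun_prop) (by fun_prop)) (by fun_prop) (by fun_prop)

theorem W1_int (ε t : ℝ) (hε : 0 < ε) (ht : 0 < t) :
    ∫⁻ e in Ico (0:ℝ) t, W1 ε t e ≤ ENNReal.ofReal (20 * t ^ ((1 : ℝ) / 10) * ε ^ (-(1 / 10) : ℝ)) := by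
  have hc : 0 < ε * t := by positivity
  unfold W1
  rw [lintegral_add_left, lintegral_const_mul, lintegral_const_mul]
  · calc _ ≤ ENNReal.ofReal (ε ^ (-(1 / 5) : ℝ)) * ENNReal.ofReal ((ε * t) ^ (-(9 / 10) + 1 : ℝ) / (-(9 / 10) + 1)) +
          ENNReal.ofReal (t ^ ((1 : ℝ) / 5)) * ENNReal.ofReal (-(ε * t) ^ (-(11 / 10) + 1 : ℝ) / (-(11 / 10) + 1)) :=
          add_le_add (mul_le_mul_right (pow_int_small t (ε * t) _ hc (by norm_num)) _)
            (mul_le_mul_right (pow_int_large t (ε * t) _ hc (by norm_num)) _)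
      _ = _ := by
          have e1 : -(ε * t) ^ (-(11 / 10) + 1 : ℝ) / (-(11 / 10) + 1) = 10 * (ε * t) ^ (-(1 / 10) : ℝ) := by
            norm_num; ring
          have e2 : (ε * t) ^ (-(9 / 10) + 1 : ℝ) / (-(9 / 10) + 1) = 10 * (ε * t) ^ ((1 / 10) : ℝ) := by
            norm_num; ring
          rw [e1, e2, ← ENNReal.ofReal_mul (by positivity), ← ENNReal.ofReal_mul (by positivity),
            ← ENNReal.ofReal_add (by positivity) (by positivity)]
          congr 1
          rw [Real.mul_rpow hε.le ht.le, Real.mul_rpow hε.le ht.le]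
          have a1 : ε ^ (-(1 / 10) : ℝ) = ε ^ (-(1 / 5) : ℝ) * ε ^ ((1 : ℝ) / 10) := by
            rw [← Real.rpow_add hε]; norm_num
          have a2 : t ^ ((1 : ℝ) / 10) = t ^ ((1 : ℝ) / 5) * t ^ (-(1 / 10) : ℝ) := by
            rw [← Real.rpow_add ht]; norm_num
          linear_combination (-10 * t ^ ((1 : ℝ) / 10)) * a1 - 10 * ε ^ (-(1 / 10) : ℝ) * a2
  · exact Measurable.ite (measurableSet_le measurable_const measurable_id) (by fun_prop) (by fun_prop)
  · exact Measurable.ite (measurableSet_lt measurable_id measurable_const) (by fun_prop) (by fun_prop)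
  · refine Measurable.const_mul ?_ _
    exact Measurable.ite (measurableSet_lt measurable_id measurable_const) (by fun_prop) (by fun_prop)

theorem W2_int (ε t : ℝ) (hε : 0 < ε) (ht : 0 < t) :
    ∫⁻ e in Ico (0:ℝ) t, W2 ε t e ≤ ENNReal.ofReal (20 * t ^ ((1 : ℝ) / 5) * ε ^ ((1 : ℝ) / 5)) := by
  have hc : 0 < ε * t := by positivity
  unfold W2
  refine (pow_int_small t (ε * t) _ hc (by norm_num)).trans (ENNReal.ofReal_le_ofReal ?_)
  have e1 : (ε * t) ^ (-(4 / 5) + 1 : ℝ) / (-(4 / 5) + 1) = 5 * (ε ^ ((1 : ℝ) / 5) * t ^ ((1 : ℝ) / 5)) := by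
    rw [← Real.mul_rpow hε.le ht.le]
    norm_num; ring
  rw [e1]
  have : 0 ≤ ε ^ ((1 : ℝ) / 5) * t ^ ((1 : ℝ) / 5) := by positivity
  linarith

theorem V1_int (ε t s : ℝ) (hε : 0 < ε) (hs : s ∈ Ioc 0 t) (x : EuclideanSpace ℝ (Fin 2)) :
    ∫⁻ y in {y | dist y x ≤ t - s}, V1 ε (t - s) (t - s - dist y x) ≤
      ENNReal.ofReal (4 * Real.pi * ε ^ (-(1 / 2) : ℝ) * t ^ ((1 : ℝ) / 2)) := by
  have hm : Measurable (V1 ε (t - s)) := by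
    have h := Measurable.comp (g := fun z : ℝ × ℝ => V1 ε z.1 z.2) (f := fun e : ℝ => (t - s, e))
      (V1_meas ε) (by fun_prop)
    exact h
  refine (ball_radial x (t - s) _ hm).trans ?_
  have h0 : 0 ≤ t - s := sub_nonneg.2 hs.2
  have h1 : t - s ≤ t := by linarith [hs.1]
  rcases h0.eq_or_lt with h | h
  · simp [← h]
  unfold V1
  refine (mul_le_mul_right (pow_int_large _ (ε * (t - s)) _ (by positivity) (by norm_num)) _).trans ?_
  rw [← ENNReal.ofReal_mul (by positivity)]
  refine ENNReal.ofReal_le_ofReal ?_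
  have e1 : -(ε * (t - s)) ^ (-(3 / 2) + 1 : ℝ) / (-(3 / 2) + 1) =
      2 * (ε ^ (-(1 / 2) : ℝ) * (t - s) ^ (-(1 / 2) : ℝ)) := by
    rw [← Real.mul_rpow hε.le h0]
    norm_num; ring
  rw [e1]
  have e2 : (t - s) * (t - s) ^ (-(1 / 2) : ℝ) = (t - s) ^ ((1 : ℝ) / 2) := by
    nth_rewrite 1 [← Real.rpow_one (t - s)]
    rw [← Real.rpow_add h]; norm_num
  calc _ = 4 * Real.pi * ε ^ (-(1 / 2) : ℝ) * ((t - s) * (t - s) ^ (-(1 / 2) : ℝ)) := by ring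
    _ ≤ _ := by rw [e2]; gcongr

theorem V2_int (ε t s : ℝ) (hε : 0 < ε) (hs : s ∈ Ioc 0 t) (x : EuclideanSpace ℝ (Fin 2)) :
    ∫⁻ y in {y | dist y x ≤ t - s}, V2 ε (t - s) (t - s - dist y x) ≤
      ENNReal.ofReal (4 * Real.pi * ε ^ (2 : ℝ)) := by
  have hm : Measurable (V2 ε (t - s)) := by
    have h := Measurable.comp (g := fun z : ℝ × ℝ => V2 ε z.1 z.2) (f := fun e : ℝ => (t - s, e))
      (V2_meas ε) (by fun_prop)
    exact h
  refine (ball_radial x (t - s) _ hm).trans ?_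
  have h0 : 0 ≤ t - s := sub_nonneg.2 hs.2
  rcases h0.eq_or_lt with h | h
  · simp [← h]
  unfold V2
  rw [lintegral_const_mul' _ _ ENNReal.ofReal_ne_top]
  refine (mul_le_mul_right (mul_le_mul_right
    (pow_int_small _ (ε * (t - s)) _ (by positivity) (by norm_num)) _) _).trans ?_
  rw [← ENNReal.ofReal_mul (by positivity), ← ENNReal.ofReal_mul (by positivity)]
  refine ENNReal.ofReal_le_ofReal ?_
  have e2 : (t - s) ^ (-2 : ℝ) = ((t - s) ^ 2)⁻¹ := by
    rw [Real.rpow_neg h0, Real.rpow_two]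
  rw [e2, zero_add, Real.rpow_one, div_one, Real.rpow_two]
  have : 2 * Real.pi * (t - s) * (ε * ((t - s) ^ 2)⁻¹ * (ε * (t - s))) = 2 * Real.pi * ε ^ 2 := by
    field_simp
  rw [this]
  have := Real.pi_pos
  nlinarith [sq_nonneg ε, mul_nonneg this.le (sq_nonneg ε)]

theorem W1_ge (ε t τ e : ℝ) (hε : 0 < ε) (hτ : 0 < τ) (hτt : τ ≤ t) (he : 0 < e) (h : ε * τ ≤ e) :
    ENNReal.ofReal (e ^ (-(11 / 10) : ℝ) * τ ^ ((1 : ℝ) / 5)) ≤ W1 ε t e := by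
  unfold W1
  by_cases hc : e < ε * t
  · rw [if_pos hc]
    refine le_trans ?_ le_self_add
    rw [← ENNReal.ofReal_mul (by positivity)]
    refine ENNReal.ofReal_le_ofReal ?_
    have h1 : τ ≤ ε⁻¹ * e := by
      rw [le_inv_mul_iff₀ hε]; exact h
    calc e ^ (-(11 / 10) : ℝ) * τ ^ ((1 : ℝ) / 5) ≤ e ^ (-(11 / 10) : ℝ) * (ε⁻¹ * e) ^ ((1 : ℝ) / 5) := by
          gcongr
      _ = ε ^ (-(1 / 5) : ℝ) * (e ^ (-(11 / 10) : ℝ) * e ^ ((1 : ℝ) / 5)) := by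
          rw [Real.mul_rpow (by positivity) he.le, Real.inv_rpow hε.le, Real.rpow_neg hε.le]; ring
      _ = _ := by rw [← Real.rpow_add he]; norm_num
  · rw [if_pos (not_lt.1 hc)]
    have ht : 0 < t := by linarith
    refine le_trans ?_ le_add_self
    rw [← ENNReal.ofReal_mul (by positivity)]
    refine ENNReal.ofReal_le_ofReal ?_
    rw [mul_comm]
    gcongr

theorem W2_ge (ε t τ e : ℝ) (hε : 0 < ε) (hτt : τ ≤ t) (h : e < ε * τ) :
    ENNReal.ofReal (e ^ (-(4 / 5) : ℝ)) ≤ W2 ε t e := by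
  unfold W2
  rw [if_pos]
  exact h.trans_le (by gcongr)

/-- Pointwise bound of the integrand. -/
theorem pointwise (C₀ : ℝ) (hC₀ : 0 < C₀) (t s ε K : ℝ) (hs : s ∈ Ioc 0 t) (hε : 0 < ε)
    (hK : 0 ≤ K) (x y : EuclideanSpace ℝ (Fin 2)) (hy : dist y x ≤ t - s)
    (f : EuclideanSpace ℝ (Fin 2) → ℝ) (hf0 : ∀ p, 0 ≤ f p) (hfC : ∀ᵐ p, f p ≤ C₀) :
    ∫⁻ p, ENNReal.ofReal (K * f p / (pZero p * (1 + ⟪pHat p, (t - s)⁻¹ • (y - x)⟫)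
                  * Real.sqrt ((t - s) ^ 2 - dist y x ^ 2))) ≤
    ENNReal.ofReal (2 * (2 * C₀ * HH + 1)) *
      ((ENNReal.ofReal (K ^ 2) * W1 ε t (t - s - dist y x)) ^ ((1 : ℝ) / 2) *
        ((∫⁻ p, ENNReal.ofReal (pZero p ^ 2 * f p)) /
          ENNReal.ofReal (Real.sqrt ((t - s) ^ 2 - dist y x ^ 2))) ^ ((2 : ℝ) / 5) *
        V1 ε (t - s) (t - s - dist y x) ^ ((1 : ℝ) / 10)) +
    ENNReal.ofReal (2 * (2 * C₀ * HH + 1)) *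
      ((ENNReal.ofReal (K ^ 2) * W2 ε t (t - s - dist y x)) ^ ((1 : ℝ) / 2) *
        ((∫⁻ p, ENNReal.ofReal (pZero p ^ 4 * f p)) /
          ENNReal.ofReal (Real.sqrt ((t - s) ^ 2 - dist y x ^ 2))) ^ ((2 : ℝ) / 5) *
        V2 ε (t - s) (t - s - dist y x) ^ ((1 : ℝ) / 10)) := by
  rcases hy.eq_or_lt with h | h
  · simp [h]
  set τ := t - s with hτdef
  have hd0 : 0 ≤ dist y x := dist_nonneg
  have hτ : 0 < τ := by linarith
  have hτt : τ ≤ t := by linarith [hs.1]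
  set e := τ - dist y x with hedef
  have he : 0 < e := by linarith
  have hS : τ ^ 2 - dist y x ^ 2 = e * (τ + dist y x) := by rw [hedef]; ring
  rw [hS]
  have hSp : 0 < Real.sqrt (e * (τ + dist y x)) := Real.sqrt_pos.2 (by positivity)
  set S := Real.sqrt (e * (τ + dist y x)) with hSdef
  set ξ := τ⁻¹ • (y - x) with hξdef
  have hξn : 1 - ‖ξ‖ = e / τ := by
    rw [hξdef, norm_smul, norm_inv, Real.norm_eq_abs, abs_of_pos hτ, ← dist_eq_norm, hedef]
    field_simp
  have hξ : ‖ξ‖ < 1 := by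
    have : 0 < e / τ := by positivity
    linarith
  have hG : ∫⁻ p, ENNReal.ofReal (K * f p / (pZero p * (1 + ⟪pHat p, ξ⟫) * S)) =
      ENNReal.ofReal (K / S) * ∫⁻ p, ENNReal.ofReal (f p * (pZero p * (1 + ⟪pHat p, ξ⟫))⁻¹) := by
    rw [← lintegral_const_mul' _ _ ENNReal.ofReal_ne_top]
    refine lintegral_congr fun p => ?_
    rw [← ENNReal.ofReal_mul (by positivity)]
    congr 1
    rw [div_eq_mul_inv, div_eq_mul_inv, mul_inv]; ring
  rw [hG]
  by_cases hc : ε * τ ≤ e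
  · refine le_trans ?_ le_self_add
    have h1 := sigma_bound C₀ hC₀ ξ hξ f hf0 hfC (2 / 5) (by norm_num) le_rfl 2 le_rfl (by norm_num)
    refine (mul_le_mul_right h1 _).trans ?_
    rw [hξn]
    refine (ptE K S _ _ _ hK hSp (by positivity) (by positivity) _ _
      (real_pt1 K e τ (τ + dist y x) hK he hτ (by linarith))).trans ?_
    gcongr
    · exact W1_ge ε t τ e hε hτ hτt he hc
    · unfold V1; rw [if_pos hc]
  · refine le_trans ?_ le_add_self
    have hc : e < ε * τ := not_le.1 hc
    have hτ2 : 0 ≤ ε * τ ^ (-2 : ℝ) := by positivity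
    have h1 := sigma_bound C₀ hC₀ ξ hξ f hf0 hfC 0 le_rfl (by norm_num) 4 (by norm_num) (by norm_num)
    refine (mul_le_mul_right h1 _).trans ?_
    rw [neg_zero, Real.rpow_zero]
    refine (ptE K S _ _ _ hK hSp (by positivity) (by positivity) _ _
      (real_pt2 K e τ (τ + dist y x) ε hK he hτ (by linarith) hc.le)).trans ?_
    gcongr
    · exact W2_ge ε t τ e hε hτt hc
    · unfold V2; rw [if_pos hc]; simp

/-- **Estimate for the Glassey–Schaeffer term `K_{S,2}` in two dimensions**
(Proposition 5.4).  If the flux of `K_g` on every backward cone with tip `(a,x)`,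
`a ∈ [0,t]`, is at most `C_f`, and `f ≤ C₀` a.e., then for `ε ∈ (0,1]`, with
`ξ = (y−x)/(t−s)`,
`∫₀ᵗ∫_{|y−x|≤t−s}∫ K_g f/(p₀(1+p̂·ξ)√((t−s)²−|y−x|²)) dp dy ds
 ≤ C(1+t)^k[ε^{−1/10}(∫₀ᵗ∫ (∫p₀²f)/√(...))^{2/5} + ε^{3/10}(∫₀ᵗ∫ (∫p₀⁴f)/√(...))^{2/5}]`. -/
theorem KS2_estimate_2d :
    ∃ k : ℝ, 0 ≤ k ∧
    ∀ C₀ Cf : ℝ, 0 < C₀ → 0 < Cf →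
    ∃ C : ℝ≥0, 0 < C ∧
      ∀ (t : ℝ), 0 < t → ∀ (x : EuclideanSpace ℝ (Fin 2)),
      ∀ (Kg : ℝ → EuclideanSpace ℝ (Fin 2) → ℝ),
        Measurable (Function.uncurry Kg) → (∀ s y, 0 ≤ Kg s y) →
        (∀ a, 0 ≤ a → a ≤ t → coneFlux Kg a x ≤ ENNReal.ofReal Cf) →
      ∀ (f : ℝ → EuclideanSpace ℝ (Fin 2) → EuclideanSpace ℝ (Fin 2) → ℝ),
        Measurable (fun z : ℝ × EuclideanSpace ℝ (Fin 2) × EuclideanSpace ℝ (Fin 2) =>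
          f z.1 z.2.1 z.2.2) →
        (∀ s y p, 0 ≤ f s y p) →
        (∀ᵐ z : ℝ × EuclideanSpace ℝ (Fin 2) × EuclideanSpace ℝ (Fin 2),
          f z.1 z.2.1 z.2.2 ≤ C₀) →
        ∀ ε : ℝ, 0 < ε → ε ≤ 1 →
          (∫⁻ s in Ioc (0 : ℝ) t, ∫⁻ y in {y | dist y x ≤ t - s},
              ∫⁻ p, ENNReal.ofReal (Kg s y * f s y p /
                (pZero p * (1 + ⟪pHat p, (t - s)⁻¹ • (y - x)⟫)
                  * Real.sqrt ((t - s) ^ 2 - dist y x ^ 2))))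
            ≤ C * ENNReal.ofReal (1 + t) ^ k *
              (ENNReal.ofReal ε ^ (-(1 / 10) : ℝ) *
                (∫⁻ s in Ioc (0 : ℝ) t, ∫⁻ y in {y | dist y x ≤ t - s},
                  (∫⁻ p, ENNReal.ofReal (pZero p ^ 2 * f s y p))
                    / ENNReal.ofReal (Real.sqrt ((t - s) ^ 2 - dist y x ^ 2)))
                      ^ ((2 : ℝ) / 5)
              + ENNReal.ofReal ε ^ ((3 : ℝ) / 10) *
                (∫⁻ s in Ioc (0 : ℝ) t, ∫⁻ y in {y | dist y x ≤ t - s},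
                  (∫⁻ p, ENNReal.ofReal (pZero p ^ 4 * f s y p))
                    / ENNReal.ofReal (Real.sqrt ((t - s) ^ 2 - dist y x ^ 2)))
                      ^ ((2 : ℝ) / 5)) := by

  refine ⟨1 / 5, by norm_num, fun C₀ Cf hC₀ hCf => ?_⟩
  have hH := HH_nonneg
  set DD : ℝ := 2 * (2 * C₀ * HH + 1) with hDD
  have hDp : 0 < DD := by positivity
  have hCC : 0 < DD * ((20 * Cf) ^ ((1 : ℝ) / 2) * (4 * Real.pi) ^ ((1 : ℝ) / 10)) := by positivity
  refine ⟨Real.toNNReal (DD * ((20 * Cf) ^ ((1 : ℝ) / 2) * (4 * Real.pi) ^ ((1 : ℝ) / 10))),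
    Real.toNNReal_pos.2 hCC, ?_⟩
  intro t ht x Kg hK hK0 hflux f hf hf0 hfC ε hε hε1
  have hK' : Measurable fun z : ℝ × EuclideanSpace ℝ (Fin 2) => Kg z.1 z.2 := hK
  have hf' : Measurable fun w : (ℝ × EuclideanSpace ℝ (Fin 2)) × EuclideanSpace ℝ (Fin 2) =>
      f w.1.1 w.1.2 w.2 := hf.comp (by fun_prop :
        Measurable fun w : (ℝ × EuclideanSpace ℝ (Fin 2)) × EuclideanSpace ℝ (Fin 2) =>
          (w.1.1, w.1.2, w.2))
  have hp := measurable_pZero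
  have hmom : ∀ n : ℕ, Measurable fun z : ℝ × EuclideanSpace ℝ (Fin 2) =>
      ∫⁻ p, ENNReal.ofReal (pZero p ^ n * f z.1 z.2 p) := by
    intro n
    refine Measurable.lintegral_prod_right'
      (f := fun w : (ℝ × EuclideanSpace ℝ (Fin 2)) × EuclideanSpace ℝ (Fin 2) =>
        ENNReal.ofReal (pZero w.2 ^ n * f w.1.1 w.1.2 w.2)) ?_
    fun_prop
  have hB : ∀ n : ℕ, Measurable fun z : ℝ × EuclideanSpace ℝ (Fin 2) =>
      (∫⁻ p, ENNReal.ofReal (pZero p ^ n * f z.1 z.2 p)) /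
        ENNReal.ofReal (Real.sqrt ((t - z.1) ^ 2 - dist z.2 x ^ 2)) := by
    intro n
    exact (hmom n).div (by fun_prop)
  have hW1 := W1_meas ε t
  have hW2 := W2_meas ε t
  have hA1 : Measurable fun z : ℝ × EuclideanSpace ℝ (Fin 2) =>
      ENNReal.ofReal (Kg z.1 z.2 ^ 2) * W1 ε t (t - z.1 - dist z.2 x) := by fun_prop
  have hA2 : Measurable fun z : ℝ × EuclideanSpace ℝ (Fin 2) =>
      ENNReal.ofReal (Kg z.1 z.2 ^ 2) * W2 ε t (t - z.1 - dist z.2 x) := by fun_prop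
  have hpair : Measurable fun z : ℝ × EuclideanSpace ℝ (Fin 2) => (t - z.1, t - z.1 - dist z.2 x) := by
    fun_prop
  have hV1 : Measurable fun z : ℝ × EuclideanSpace ℝ (Fin 2) => V1 ε (t - z.1) (t - z.1 - dist z.2 x) := by
    have h := Measurable.comp (g := fun z : ℝ × ℝ => V1 ε z.1 z.2) (V1_meas ε) hpair
    exact h
  have hV2 : Measurable fun z : ℝ × EuclideanSpace ℝ (Fin 2) => V2 ε (t - z.1) (t - z.1 - dist z.2 x) := by
    have h := Measurable.comp (g := fun z : ℝ × ℝ => V2 ε z.1 z.2) (V2_meas ε) hpair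
    exact h
  have hph : Measurable pHat := by unfold pHat; fun_prop
  have hGm : Measurable fun z : ℝ × EuclideanSpace ℝ (Fin 2) =>
      ∫⁻ p, ENNReal.ofReal (Kg z.1 z.2 * f z.1 z.2 p /
                (pZero p * (1 + ⟪pHat p, (t - z.1)⁻¹ • (z.2 - x)⟫)
                  * Real.sqrt ((t - z.1) ^ 2 - dist z.2 x ^ 2))) := by
    refine Measurable.lintegral_prod_right'
      (f := fun w : (ℝ × EuclideanSpace ℝ (Fin 2)) × EuclideanSpace ℝ (Fin 2) =>
        ENNReal.ofReal (Kg w.1.1 w.1.2 * f w.1.1 w.1.2 w.2 /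
                (pZero w.2 * (1 + ⟪pHat w.2, (t - w.1.1)⁻¹ • (w.1.2 - x)⟫)
                  * Real.sqrt ((t - w.1.1) ^ 2 - dist w.1.2 x ^ 2)))) ?_
    have hin : Measurable fun w : (ℝ × EuclideanSpace ℝ (Fin 2)) × EuclideanSpace ℝ (Fin 2) =>
        ⟪pHat w.2, (t - w.1.1)⁻¹ • (w.1.2 - x)⟫ :=
      Measurable.inner (by fun_prop) (by fun_prop)
    have hk2 : Measurable fun w : (ℝ × EuclideanSpace ℝ (Fin 2)) × EuclideanSpace ℝ (Fin 2) =>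
        Kg w.1.1 w.1.2 := hK'.comp measurable_fst
    fun_prop
  have hae : ∀ᵐ z : ℝ × EuclideanSpace ℝ (Fin 2), ∀ᵐ p, f z.1 z.2 p ≤ C₀ := by
    have h1 := (volume_preserving_prodAssoc (α₁ := ℝ) (β₁ := EuclideanSpace ℝ (Fin 2))
      (γ₁ := EuclideanSpace ℝ (Fin 2))).quasiMeasurePreserving.ae hfC
    exact Measure.ae_ae_of_ae_prod h1
  -- totals
  have tA1 : ∫⁻ s in Ioc (0:ℝ) t, ∫⁻ y in {y | dist y x ≤ t - s},
      ENNReal.ofReal (Kg s y ^ 2) * W1 ε t (t - s - dist y x) ≤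
      ENNReal.ofReal (Cf * (20 * t ^ ((1 : ℝ) / 10) * ε ^ (-(1 / 10) : ℝ))) := by
    refine (flux_weight Kg hK x t Cf hflux _ hW1).trans ?_
    rw [ENNReal.ofReal_mul hCf.le]
    exact mul_le_mul_right (W1_int ε t hε ht) _
  have tA2 : ∫⁻ s in Ioc (0:ℝ) t, ∫⁻ y in {y | dist y x ≤ t - s},
      ENNReal.ofReal (Kg s y ^ 2) * W2 ε t (t - s - dist y x) ≤
      ENNReal.ofReal (Cf * (20 * t ^ ((1 : ℝ) / 5) * ε ^ ((1 : ℝ) / 5))) := by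
    refine (flux_weight Kg hK x t Cf hflux _ hW2).trans ?_
    rw [ENNReal.ofReal_mul hCf.le]
    exact mul_le_mul_right (W2_int ε t hε ht) _
  have tV1 : ∫⁻ s in Ioc (0:ℝ) t, ∫⁻ y in {y | dist y x ≤ t - s}, V1 ε (t - s) (t - s - dist y x) ≤
      ENNReal.ofReal (4 * Real.pi * ε ^ (-(1 / 2) : ℝ) * t ^ ((1 : ℝ) / 2) * t) := by
    refine (setLIntegral_mono' measurableSet_Ioc fun s hs => V1_int ε t s hε hs x).trans ?_
    rw [setLIntegral_const, Real.volume_Ioc, sub_zero, ← ENNReal.ofReal_mul (by positivity)]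
  have tV2 : ∫⁻ s in Ioc (0:ℝ) t, ∫⁻ y in {y | dist y x ≤ t - s}, V2 ε (t - s) (t - s - dist y x) ≤
      ENNReal.ofReal (4 * Real.pi * ε ^ (2 : ℝ) * t) := by
    refine (setLIntegral_mono' measurableSet_Ioc fun s hs => V2_int ε t s hε hs x).trans ?_
    rw [setLIntegral_const, Real.volume_Ioc, sub_zero, ← ENNReal.ofReal_mul (by positivity)]
  rw [iter_eq _ hA1 x t] at tA1
  rw [iter_eq _ hA2 x t] at tA2
  rw [iter_eq _ hV1 x t] at tV1
  rw [iter_eq _ hV2 x t] at tV2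
  rw [iter_eq _ hGm x t, iter_eq _ (hB 2) x t, iter_eq _ (hB 4) x t]
  set Ω := {z : ℝ × EuclideanSpace ℝ (Fin 2) | z.1 ∈ Ioc 0 t ∧ dist z.2 x ≤ t - z.1} with hΩ
  have hΩm : MeasurableSet Ω := (measurable_fst measurableSet_Ioc).inter
      (measurableSet_le (f := fun z : ℝ × EuclideanSpace ℝ (Fin 2) => dist z.2 x)
        (g := fun z : ℝ × EuclideanSpace ℝ (Fin 2) => t - z.1) (by fun_prop) (by fun_prop))
  set M2 := ∫⁻ z in Ω, (∫⁻ p, ENNReal.ofReal (pZero p ^ 2 * f z.1 z.2 p)) /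
        ENNReal.ofReal (Real.sqrt ((t - z.1) ^ 2 - dist z.2 x ^ 2))
  set M4 := ∫⁻ z in Ω, (∫⁻ p, ENNReal.ofReal (pZero p ^ 4 * f z.1 z.2 p)) /
        ENNReal.ofReal (Real.sqrt ((t - z.1) ^ 2 - dist z.2 x ^ 2))
  have step1 := setLIntegral_mono_ae' hΩm (μ := volume) (hae.mono fun z hz (hzΩ : z ∈ Ω) =>
    pointwise C₀ hC₀ t z.1 ε (Kg z.1 z.2) hzΩ.1 hε (hK0 _ _) x z.2 hzΩ.2 (f z.1 z.2) (hf0 _ _) hz)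
  refine step1.trans ?_
  rw [lintegral_add_left (by
      have := hB 2
      fun_prop), lintegral_const_mul' _ _ ENNReal.ofReal_ne_top,
    lintegral_const_mul' _ _ ENNReal.ofReal_ne_top]
  have h1 := holder3 (volume.restrict Ω) _ _ _ hA1 (hB 2) hV1
  have h2 := holder3 (volume.restrict Ω) _ _ _ hA2 (hB 4) hV2
  have h1' := mul_le_mul_right h1 (ENNReal.ofReal DD)
  have h2' := mul_le_mul_right h2 (ENNReal.ofReal DD)
  refine le_trans (add_le_add h1' h2') ?_
  clear step1 h1 h2 h1' h2'
  clear_value DD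
  have h3 : (1 + t) ^ ((1 : ℝ) / 5) ≥ t ^ ((1 : ℝ) / 5) :=
    Real.rpow_le_rpow ht.le (by linarith) (by norm_num)
  have ht1 : 0 < 1 + t := by linarith
  rw [ENNReal.ofReal_rpow_of_pos hε, ENNReal.ofReal_rpow_of_pos hε, ENNReal.ofReal_rpow_of_pos ht1,
    show ((Real.toNNReal (DD * ((20 * Cf) ^ ((1 : ℝ) / 2) * (4 * Real.pi) ^ ((1 : ℝ) / 10))) : ℝ≥0) : ℝ≥0∞)
      = ENNReal.ofReal (DD * ((20 * Cf) ^ ((1 : ℝ) / 2) * (4 * Real.pi) ^ ((1 : ℝ) / 10))) from rfl,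
    mul_add]
  refine add_le_add ?_ ?_
  · calc _ ≤ ENNReal.ofReal DD * (ENNReal.ofReal (Cf * (20 * t ^ ((1 : ℝ) / 10) * ε ^ (-(1 / 10) : ℝ)))
            ^ ((1 : ℝ) / 2) * M2 ^ ((2 : ℝ) / 5) *
          ENNReal.ofReal (4 * Real.pi * ε ^ (-(1 / 2) : ℝ) * t ^ ((1 : ℝ) / 2) * t) ^ ((1 : ℝ) / 10)) := by
          gcongr
      _ = ENNReal.ofReal (DD * ((Cf * (20 * t ^ ((1 : ℝ) / 10) * ε ^ (-(1 / 10) : ℝ))) ^ ((1 : ℝ) / 2) *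
          (4 * Real.pi * ε ^ (-(1 / 2) : ℝ) * t ^ ((1 : ℝ) / 2) * t) ^ ((1 : ℝ) / 10))) *
            M2 ^ ((2 : ℝ) / 5) := by
          rw [ENNReal.ofReal_rpow_of_pos (by positivity), ENNReal.ofReal_rpow_of_pos (by positivity),
            ENNReal.ofReal_mul hDp.le, ENNReal.ofReal_mul (by positivity)]
          ring
      _ ≤ ENNReal.ofReal (DD * ((20 * Cf) ^ ((1 : ℝ) / 2) * (4 * Real.pi) ^ ((1 : ℝ) / 10)) *
          (1 + t) ^ ((1 : ℝ) / 5) * ε ^ (-(1 / 10) : ℝ)) * M2 ^ ((2 : ℝ) / 5) := by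
          gcongr ENNReal.ofReal ?_ * _
          have e1 : (Cf * (20 * t ^ ((1 : ℝ) / 10) * ε ^ (-(1 / 10) : ℝ))) ^ ((1 : ℝ) / 2) =
              (20 * Cf) ^ ((1 : ℝ) / 2) * t ^ ((1 : ℝ) / 20) * ε ^ (-(1 / 20) : ℝ) := by
            rw [show Cf * (20 * t ^ ((1 : ℝ) / 10) * ε ^ (-(1 / 10) : ℝ)) =
              (20 * Cf) * t ^ ((1 : ℝ) / 10) * ε ^ (-(1 / 10) : ℝ) by ring,
              Real.mul_rpow (by positivity) (by positivity),
              Real.mul_rpow (by positivity) (by positivity), ← Real.rpow_mul ht.le,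
              ← Real.rpow_mul hε.le]
            norm_num
          have e2 : (4 * Real.pi * ε ^ (-(1 / 2) : ℝ) * t ^ ((1 : ℝ) / 2) * t) ^ ((1 : ℝ) / 10) =
              (4 * Real.pi) ^ ((1 : ℝ) / 10) * ε ^ (-(1 / 20) : ℝ) * t ^ ((3 : ℝ) / 20) := by
            rw [mul_assoc, ← Real.rpow_add_one ht.ne',
              Real.mul_rpow (by positivity) (by positivity),
              Real.mul_rpow (by positivity) (by positivity), ← Real.rpow_mul ht.le,
              ← Real.rpow_mul hε.le]
            norm_num
          have e3 : ε ^ (-(1 / 20) : ℝ) * ε ^ (-(1 / 20) : ℝ) = ε ^ (-(1 / 10) : ℝ) := by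
            rw [← Real.rpow_add hε]; norm_num
          have e4 : t ^ ((1 : ℝ) / 20) * t ^ ((3 : ℝ) / 20) = t ^ ((1 : ℝ) / 5) := by
            rw [← Real.rpow_add ht]; norm_num
          rw [e1, e2]
          calc _ = DD * ((20 * Cf) ^ ((1 : ℝ) / 2) * (4 * Real.pi) ^ ((1 : ℝ) / 10)) *
              (t ^ ((1 : ℝ) / 20) * t ^ ((3 : ℝ) / 20)) * (ε ^ (-(1 / 20) : ℝ) * ε ^ (-(1 / 20) : ℝ)) := by
                ring
            _ ≤ _ := by
                rw [e3, e4]; gcongr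
      _ = _ := by
          rw [ENNReal.ofReal_mul (by positivity), ENNReal.ofReal_mul (by positivity)]
          ring
  · calc _ ≤ ENNReal.ofReal DD * (ENNReal.ofReal (Cf * (20 * t ^ ((1 : ℝ) / 5) * ε ^ ((1 : ℝ) / 5)))
            ^ ((1 : ℝ) / 2) * M4 ^ ((2 : ℝ) / 5) *
          ENNReal.ofReal (4 * Real.pi * ε ^ (2 : ℝ) * t) ^ ((1 : ℝ) / 10)) := by
          gcongr
      _ = ENNReal.ofReal (DD * ((Cf * (20 * t ^ ((1 : ℝ) / 5) * ε ^ ((1 : ℝ) / 5))) ^ ((1 : ℝ) / 2) *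
          (4 * Real.pi * ε ^ (2 : ℝ) * t) ^ ((1 : ℝ) / 10))) *
            M4 ^ ((2 : ℝ) / 5) := by
          rw [ENNReal.ofReal_rpow_of_pos (by positivity), ENNReal.ofReal_rpow_of_pos (by positivity),
            ENNReal.ofReal_mul hDp.le, ENNReal.ofReal_mul (by positivity)]
          ring
      _ ≤ ENNReal.ofReal (DD * ((20 * Cf) ^ ((1 : ℝ) / 2) * (4 * Real.pi) ^ ((1 : ℝ) / 10)) *
          (1 + t) ^ ((1 : ℝ) / 5) * ε ^ ((3 : ℝ) / 10)) * M4 ^ ((2 : ℝ) / 5) := by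
          gcongr ENNReal.ofReal ?_ * _
          have e1 : (Cf * (20 * t ^ ((1 : ℝ) / 5) * ε ^ ((1 : ℝ) / 5))) ^ ((1 : ℝ) / 2) =
              (20 * Cf) ^ ((1 : ℝ) / 2) * t ^ ((1 : ℝ) / 10) * ε ^ ((1 : ℝ) / 10) := by
            rw [show Cf * (20 * t ^ ((1 : ℝ) / 5) * ε ^ ((1 : ℝ) / 5)) =
              (20 * Cf) * t ^ ((1 : ℝ) / 5) * ε ^ ((1 : ℝ) / 5) by ring,
              Real.mul_rpow (by positivity) (by positivity),
              Real.mul_rpow (by positivity) (by positivity), ← Real.rpow_mul ht.le,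
              ← Real.rpow_mul hε.le]
            norm_num
          have e2 : (4 * Real.pi * ε ^ (2 : ℝ) * t) ^ ((1 : ℝ) / 10) =
              (4 * Real.pi) ^ ((1 : ℝ) / 10) * ε ^ ((1 : ℝ) / 5) * t ^ ((1 : ℝ) / 10) := by
            rw [Real.mul_rpow (by positivity) (by positivity),
              Real.mul_rpow (by positivity) (by positivity), ← Real.rpow_mul hε.le,
              show (2 : ℝ) * (1 / 10) = 1 / 5 by norm_num]
          have e3 : ε ^ ((1 : ℝ) / 10) * ε ^ ((1 : ℝ) / 5) = ε ^ ((3 : ℝ) / 10) := by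
            rw [← Real.rpow_add hε]; norm_num
          have e4 : t ^ ((1 : ℝ) / 10) * t ^ ((1 : ℝ) / 10) = t ^ ((1 : ℝ) / 5) := by
            rw [← Real.rpow_add ht]; norm_num
          rw [e1, e2]
          calc _ = DD * ((20 * Cf) ^ ((1 : ℝ) / 2) * (4 * Real.pi) ^ ((1 : ℝ) / 10)) *
              (t ^ ((1 : ℝ) / 10) * t ^ ((1 : ℝ) / 10)) * (ε ^ ((1 : ℝ) / 10) * ε ^ ((1 : ℝ) / 5)) := by
                ring
            _ ≤ _ := by
                rw [e3, e4]; gcongr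
      _ = _ := by
          rw [ENNReal.ofReal_mul (by positivity), ENNReal.ofReal_mul (by positivity)]
          ring
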